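/- arXiv:1807.06948 — 2 statements merged into one kernel-verified Lean document; each statement's English description precedes it below -/
import Mathlib

section
/- Let s > 1/2, 0 < t₁ < t₂, M ∈ ℝ, ε ∈ {+1,−1}, and let A : (t₁,t₂) → ℓ^{2,s}(ℤ) be continuously differentiable as a map into the Banach space ℓ^{2,s}(ℤ), such that each component satisfies i A_k'(t) = ε (1/(8πt)) ∑_{(j₁,j₂,j₃)∈ℤ³, k−j₁+j₂−j₃=0} e^{−i(k²−j₁²+j₂²−j₃²)/(4t)} A_{j₁}(t) \overline{A_{j₂}(t)} A_{j₃}(t) − (M/(4πt)) A_k(t). Then the mass ∑_{k∈ℤ} |A_k(t)|² is constant on (t₁,t₂). -/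
open scoped BigOperators
open Set

/-- Membership in the weighted space `ℓ^{2,s}(ℤ)`. -/
def wMem (s : ℝ) (a : ℤ → ℂ) : Prop :=
  Summable (fun k : ℤ => (1 + |(k : ℝ)|) ^ (2 * s) * ‖a k‖ ^ 2)

/-- The cubic interaction sum `∑_{k-j₁+j₂-j₃=0} e^{-i(k²-j₁²+j₂²-j₃²)/(4t)} A_{j₁} conj(A_{j₂}) A_{j₃}`,
parametrized by the two free indices `(j₁, j₂)`, with `j₃ = k - j₁ + j₂`. -/
noncomputable def cubicSum (A : ℤ → ℂ) (t : ℝ) (k : ℤ) : ℂ :=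
  ∑' j : ℤ × ℤ,
    Complex.exp (-Complex.I *
        ((k ^ 2 - j.1 ^ 2 + j.2 ^ 2 - (k - j.1 + j.2) ^ 2 : ℤ) : ℂ) / (4 * (t : ℂ)))
      * A j.1 * (starRingEnd ℂ) (A j.2) * A (k - j.1 + j.2)

/-- `A : (t₁,t₂) → ℓ^{2,s}` is continuously differentiable as a map into the Banach
space `ℓ^{2,s}(ℤ)`: the weighted sequence `k ↦ (1+|k|)^s A_k(t)` defines a `C¹` curve in `ℓ²`. -/
def C1IntoL2s (s t₁ t₂ : ℝ) (A : ℝ → ℤ → ℂ) : Prop :=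
  ∃ B : ℝ → lp (fun _ : ℤ => ℂ) 2,
    (∀ t ∈ Ioo t₁ t₂, ∀ k : ℤ, B t k = ((1 + |(k : ℝ)|) ^ s : ℝ) * A t k) ∧
    ContDiffOn ℝ 1 B (Ioo t₁ t₂)

/-!
Pairing `i A' = g N(A) + m A` with `A` in the real Hilbert space `ℓ²` gives
`½ d/dt ∑ |Aₖ|² = g Im ∑ conj(Aₖ) N(A)ₖ`. Since `A(t) ∈ ℓ¹`, the last sum is an absolutely
convergent sum over the quadruples `(k, j₁, j₂, j₃)` with `k - j₁ + j₂ - j₃ = 0`, and exchanging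
`(k, j₂)` with `(j₁, j₃)` conjugates its terms, so it is real and the mass is constant.
-/

section WeightedSequences

lemma summable_one_add_abs_rpow_inv {p : ℝ} (hp : 1 < p) :
    Summable fun k : ℤ => ((1 + |(k : ℝ)|) ^ p)⁻¹ := by
  have hnat := (summable_nat_add_iff 1).2 (Real.summable_nat_rpow_inv.2 hp)
  exact Summable.of_nat_of_neg (by simpa [add_comm] using hnat) (by simpa [add_comm] using hnat)

lemma summable_norm_of_summable_mul_norm_sq {ι E : Type*} [SeminormedAddCommGroup E]
    {w : ι → ℝ} {a : ι → E} (hw : ∀ i, 0 < w i) (hinv : Summable fun i => (w i)⁻¹)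
    (ha : Summable fun i => w i * ‖a i‖ ^ 2) : Summable fun i => ‖a i‖ := by
  refine (hinv.add ha).of_nonneg_of_le (fun i => norm_nonneg _) fun i => ?_
  have hsq : 0 ≤ w i * (‖a i‖ - (w i)⁻¹) ^ 2 := mul_nonneg (hw i).le (sq_nonneg _)
  have hexpand : w i * (‖a i‖ - (w i)⁻¹) ^ 2 = w i * ‖a i‖ ^ 2 - 2 * ‖a i‖ + (w i)⁻¹ := by
    field_simp [(hw i).ne']
    ring
  linarith [norm_nonneg (a i)]

lemma wMem.summable_norm {s : ℝ} {a : ℤ → ℂ} (ha : wMem s a) (hs : 1 / 2 < s) :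
    Summable fun k => ‖a k‖ :=
  summable_norm_of_summable_mul_norm_sq (fun _ => by positivity)
    (summable_one_add_abs_rpow_inv (by linarith)) ha

/-- Division by a weight `w ≥ 1`, as a bounded operator on `ℓ²`; it realises the embedding of the
weighted space into `ℓ²`. -/
noncomputable def lpDivWeight {ι : Type*} (w : ι → ℝ) (hw : ∀ i, 1 ≤ w i) :
    lp (fun _ : ι => ℂ) 2 →L[ℝ] lp (fun _ : ι => ℂ) 2 :=
  lp.mapCLM 2 (fun i => (w i)⁻¹ • ContinuousLinearMap.id ℝ ℂ) zero_le_one fun i => by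
    have hnonneg : 0 ≤ (w i)⁻¹ := inv_nonneg.2 (zero_le_one.trans (hw i))
    rw [norm_smul, ContinuousLinearMap.norm_id, mul_one, Real.norm_of_nonneg hnonneg]
    exact inv_le_one_of_one_le₀ (hw i)

lemma lpDivWeight_apply {ι : Type*} {w : ι → ℝ} (hw : ∀ i, 1 ≤ w i)
    (f : lp (fun _ : ι => ℂ) 2) (i : ι) : lpDivWeight w hw f i = (w i)⁻¹ • f i :=
  rfl

lemma C1IntoL2s.exists_contDiffOn_lp {s t₁ t₂ : ℝ} {A : ℝ → ℤ → ℂ} (hA : C1IntoL2s s t₁ t₂ A)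
    (hs : 0 ≤ s) : ∃ u : ℝ → lp (fun _ : ℤ => ℂ) 2,
      ContDiffOn ℝ 1 u (Ioo t₁ t₂) ∧ ∀ t ∈ Ioo t₁ t₂, ∀ k, u t k = A t k := by
  obtain ⟨B, hB, hBdiff⟩ := hA
  have hw (k : ℤ) : 1 ≤ (1 + |(k : ℝ)|) ^ s :=
    Real.one_le_rpow (le_add_of_nonneg_right (abs_nonneg _)) hs
  refine ⟨fun t => lpDivWeight _ hw (B t),
    (lpDivWeight _ hw).contDiff.comp_contDiffOn hBdiff, fun t ht k => ?_⟩
  rw [lpDivWeight_apply, hB t ht k, ← Complex.real_smul,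
    inv_smul_smul₀ (zero_lt_one.trans_le (hw k)).ne']

end WeightedSequences

section CubicInteraction

open scoped ComplexConjugate

variable {G : Type*} [AddCommGroup G]

/-- The cubic interaction `∑_{k-j₁+j₂-j₃=0} c(k,j₁,j₂) a_{j₁} conj(a_{j₂}) a_{j₃}` with kernel `c`,
parametrized by `(j₁, j₂)`, with `j₃ = k - j₁ + j₂`. -/
noncomputable def cubicInteraction (c : G × G × G → ℂ) (a : G → ℂ) (k : G) : ℂ :=
  ∑' j : G × G, c (k, j) * a j.1 * conj (a j.2) * a (k - j.1 + j.2)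

/-- The summand of the quartic form `∑ₖ conj(aₖ) (cubicInteraction c a)ₖ`, at `(k, j₁, j₂)`. -/
noncomputable def quarticTerm (c : G × G × G → ℂ) (a : G → ℂ) (x : G × G × G) : ℂ :=
  conj (a x.1) * (c x * a x.2.1 * conj (a x.2.2) * a (x.1 - x.2.1 + x.2.2))

/-- The exchange of `(k, j₂)` with `(j₁, j₃)` on the quadruples with `k - j₁ + j₂ - j₃ = 0`,
in the coordinates `(k, j₁, j₂)`. -/
def quartetExchange (G : Type*) [AddCommGroup G] : Equiv.Perm (G × G × G) :=
  Function.Involutive.toPerm (fun x => (x.2.1, x.1, x.1 - x.2.1 + x.2.2)) fun x => by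
    have hlast : x.2.1 - x.1 + (x.1 - x.2.1 + x.2.2) = x.2.2 := by abel
    simp only [hlast]

lemma quartetExchange_apply (x : G × G × G) :
    quartetExchange G x = (x.2.1, x.1, x.1 - x.2.1 + x.2.2) :=
  rfl

/-- The symmetry `c(j₁,k,j₃) = conj c(k,j₁,j₂)` of a kernel, which makes its quartic form real. -/
def IsHermitianKernel (c : G × G × G → ℂ) : Prop :=
  ∀ x, c (quartetExchange G x) = conj (c x)

variable {c : G × G × G → ℂ} {C : ℝ} {a : G → ℂ}

lemma summable_quarticTerm (hc : ∀ x, ‖c x‖ ≤ C) (ha : Summable fun k => ‖a k‖) :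
    Summable (quarticTerm c a) := by
  have hprod : Summable fun x : G × G × G => ‖a x.1‖ * (‖a x.2.1‖ * ‖a x.2.2‖) :=
    ha.mul_of_nonneg (ha.mul_of_nonneg ha (fun _ => norm_nonneg _) fun _ => norm_nonneg _)
      (fun _ => norm_nonneg _) fun _ => by positivity
  refine (hprod.mul_left (C * ∑' k, ‖a k‖)).of_norm_bounded fun x => ?_
  have hlast : ‖a (x.1 - x.2.1 + x.2.2)‖ ≤ ∑' k, ‖a k‖ := ha.le_tsum _ fun _ _ => norm_nonneg _
  have hC : 0 ≤ C := (norm_nonneg _).trans (hc x)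
  calc ‖quarticTerm c a x‖
      = ‖c x‖ * ‖a (x.1 - x.2.1 + x.2.2)‖ * (‖a x.1‖ * (‖a x.2.1‖ * ‖a x.2.2‖)) := by
        simp only [quarticTerm, norm_mul, RCLike.norm_conj]
        ring
    _ ≤ C * (∑' k, ‖a k‖) * (‖a x.1‖ * (‖a x.2.1‖ * ‖a x.2.2‖)) := by
        gcongr
        exact hc x

lemma hasSum_conj_mul_cubicInteraction (hc : ∀ x, ‖c x‖ ≤ C) (ha : Summable fun k => ‖a k‖) :
    HasSum (fun k => conj (a k) * cubicInteraction c a k) (∑' x, quarticTerm c a x) := by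
  have hsum := summable_quarticTerm hc ha
  have hfiber (k : G) : conj (a k) * cubicInteraction c a k = ∑' j, quarticTerm c a (k, j) :=
    tsum_mul_left.symm
  simp only [hfiber, hsum.tsum_prod]
  exact hsum.prod.hasSum

lemma quarticTerm_quartetExchange (hc : IsHermitianKernel c) (x : G × G × G) :
    quarticTerm c a (quartetExchange G x) = conj (quarticTerm c a x) := by
  have hlast : x.2.1 - x.1 + (x.1 - x.2.1 + x.2.2) = x.2.2 := by abel
  rw [quarticTerm, hc x, quarticTerm]
  simp only [quartetExchange_apply, hlast, map_mul, Complex.conj_conj]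
  ring

lemma im_tsum_quarticTerm (hc : IsHermitianKernel c) : (∑' x, quarticTerm c a x).im = 0 := by
  rw [← Complex.conj_eq_iff_im, Complex.conj_tsum, ← (quartetExchange G).tsum_eq (quarticTerm c a)]
  simp only [quarticTerm_quartetExchange hc]

lemma hasSum_im_conj_mul_cubicInteraction (hbdd : ∀ x, ‖c x‖ ≤ C) (hherm : IsHermitianKernel c)
    (ha : Summable fun k => ‖a k‖) :
    HasSum (fun k => (conj (a k) * cubicInteraction c a k).im) 0 := by
  simpa only [im_tsum_quarticTerm hherm] using
    Complex.hasSum_im (hasSum_conj_mul_cubicInteraction hbdd ha)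

lemma inner_eq_zero_of_I_mul_eq_cubicInteraction {a v : lp (fun _ : G => ℂ) 2} {g : ℝ} {m : G → ℝ}
    (hbdd : ∀ x, ‖c x‖ ≤ C) (hherm : IsHermitianKernel c) (ha : Summable fun k => ‖a k‖)
    (hv : ∀ k, Complex.I * v k = g * cubicInteraction c a k + m k * a k) :
    inner ℝ a v = 0 := by
  have hterm (k : G) : inner ℝ (a k) (v k) = g * (conj (a k) * cubicInteraction c a k).im := by
    calc inner ℝ (a k) (v k) = (conj (a k) * (Complex.I * v k)).im := by
          rw [mul_left_comm, Complex.I_mul_im, mul_comm, Complex.inner]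
      _ = g * (conj (a k) * cubicInteraction c a k).im := by
          rw [hv k, mul_add, mul_left_comm, mul_left_comm _ (m k : ℂ), Complex.conj_mul',
            Complex.add_im, Complex.im_ofReal_mul, Complex.im_ofReal_mul, ← Complex.ofReal_pow,
            Complex.ofReal_im, mul_zero, add_zero]
  have hflux := (hasSum_im_conj_mul_cubicInteraction hbdd hherm ha).mul_left g
  rw [mul_zero] at hflux
  exact (lp.hasSum_inner (𝕜 := ℝ) a v).unique (hflux.congr_fun hterm)

end CubicInteraction

section Conservation

lemma norm_sq_eq_of_inner_deriv_eq_zero {E : Type*} [NormedAddCommGroup E] [InnerProductSpace ℝ E]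
    {I : Set ℝ} (hI : IsOpen I) (hI' : IsPreconnected I) {u : ℝ → E} (hu : DifferentiableOn ℝ u I)
    (horth : ∀ t ∈ I, inner ℝ (u t) (deriv u t) = 0) {t t' : ℝ} (ht : t ∈ I) (ht' : t' ∈ I) :
    ‖u t‖ ^ 2 = ‖u t'‖ ^ 2 := by
  have hderiv (τ : ℝ) (hτ : τ ∈ I) : HasDerivAt (fun τ => ‖u τ‖ ^ 2) 0 τ := by
    simpa only [horth τ hτ, mul_zero] using
      (hu.differentiableAt (hI.mem_nhds hτ)).hasDerivAt.norm_sq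
  exact hI.is_const_of_deriv_eq_zero hI'
    (fun τ hτ => (hderiv τ hτ).differentiableAt.differentiableWithinAt)
    (fun τ hτ => (hderiv τ hτ).deriv) ht ht'

lemma lp_two_norm_sq_eq_tsum {ι : Type*} {E : ι → Type*} [∀ i, NormedAddCommGroup (E i)]
    (f : lp E 2) : ‖f‖ ^ 2 = ∑' i, ‖f i‖ ^ 2 := by
  simpa only [ENNReal.toReal_ofNat, Real.rpow_two] using lp.norm_rpow_eq_tsum (by norm_num) f

lemma deriv_lp_apply {ι : Type*} {E : ι → Type*} [∀ i, NormedAddCommGroup (E i)]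
    [∀ i, NormedSpace ℝ (E i)] {p : ENNReal} [Fact (1 ≤ p)] {u : ℝ → lp E p} {t : ℝ}
    (hu : DifferentiableAt ℝ u t) (i : ι) : deriv (fun τ => u τ i) t = deriv u t i :=
  ((lp.evalCLM ℝ E p i).hasFDerivAt.comp_hasDerivAt t hu.hasDerivAt).deriv

theorem mass_conservation_general {G : Type*} [AddCommGroup G] {I : Set ℝ} (hI : IsOpen I)
    (hI' : IsPreconnected I) {A : ℝ → G → ℂ} {u : ℝ → lp (fun _ : G => ℂ) 2}
    (hu : DifferentiableOn ℝ u I) (huA : ∀ t ∈ I, ∀ k, u t k = A t k)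
    (hsum : ∀ t ∈ I, Summable fun k => ‖A t k‖) {c : ℝ → G × G × G → ℂ} {C : ℝ → ℝ}
    (hbdd : ∀ t ∈ I, ∀ x, ‖c t x‖ ≤ C t) (hherm : ∀ t ∈ I, IsHermitianKernel (c t))
    {g : ℝ → ℝ} {m : ℝ → G → ℝ}
    (hode : ∀ t ∈ I, ∀ k, Complex.I * deriv (fun τ => A τ k) t =
      g t * cubicInteraction (c t) (A t) k + m t k * A t k) :
    ∀ t ∈ I, ∀ t' ∈ I, ∑' k, ‖A t k‖ ^ 2 = ∑' k, ‖A t' k‖ ^ 2 := by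
  have hcoe (t : ℝ) (ht : t ∈ I) : ⇑(u t) = A t := funext (huA t ht)
  have hderiv (t : ℝ) (ht : t ∈ I) (k : G) : deriv (fun τ => A τ k) t = deriv u t k := by
    rw [← deriv_lp_apply (hu.differentiableAt (hI.mem_nhds ht))]
    refine Filter.EventuallyEq.deriv_eq ?_
    filter_upwards [hI.mem_nhds ht] with τ hτ using (huA τ hτ k).symm
  have horth (t : ℝ) (ht : t ∈ I) : inner ℝ (u t) (deriv u t) = 0 := by
    refine inner_eq_zero_of_I_mul_eq_cubicInteraction (g := g t) (m := m t) (hbdd t ht) (hherm t ht)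
      ?_ fun k => ?_
    · simpa only [hcoe t ht] using hsum t ht
    · rw [← hderiv t ht, hode t ht, hcoe t ht]
  intro t ht t' ht'
  simpa only [lp_two_norm_sq_eq_tsum, hcoe t ht, hcoe t' ht'] using
    norm_sq_eq_of_inner_deriv_eq_zero hI hI' hu horth ht ht'

end Conservation

section ResonancePhase

/-- The oscillating kernel `e^{-i(k²-j₁²+j₂²-j₃²)/(4t)}` of `cubicSum`, at `(k, j₁, j₂)` with
`j₃ = k - j₁ + j₂`. -/
noncomputable def resonancePhase (t : ℝ) (x : ℤ × ℤ × ℤ) : ℂ :=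
  Complex.exp (-Complex.I *
    ((x.1 ^ 2 - x.2.1 ^ 2 + x.2.2 ^ 2 - (x.1 - x.2.1 + x.2.2) ^ 2 : ℤ) : ℂ) / (4 * (t : ℂ)))

lemma cubicSum_eq_cubicInteraction (a : ℤ → ℂ) (t : ℝ) :
    cubicSum a t = cubicInteraction (resonancePhase t) a :=
  rfl

lemma norm_resonancePhase (t : ℝ) (x : ℤ × ℤ × ℤ) : ‖resonancePhase t x‖ = 1 := by
  have hphase (n : ℤ) : -Complex.I * (n : ℂ) / (4 * (t : ℂ)) =
      ((-(n : ℝ) / (4 * t) : ℝ) : ℂ) * Complex.I := by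
    push_cast
    ring
  rw [resonancePhase, hphase, Complex.norm_exp_ofReal_mul_I]

lemma isHermitianKernel_resonancePhase (t : ℝ) : IsHermitianKernel (resonancePhase t) := by
  intro x
  rw [resonancePhase, resonancePhase, ← Complex.exp_conj]
  congr 1
  simp only [quartetExchange_apply, map_div₀, map_mul, map_neg, Complex.conj_I,
    Complex.conj_ofReal, map_intCast, map_ofNat]
  push_cast
  ring

end ResonancePhase

/-- Conservation of mass: for a `C¹`-in-`ℓ^{2,s}` solution of the coefficient system,
the mass `∑_k |A_k(t)|²` is constant on `(t₁,t₂)`. -/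
theorem mass_conservation (s t₁ t₂ M ε : ℝ) (hs : 1 / 2 < s)
    (ht₁ : 0 < t₁) (ht : t₁ < t₂) (hε : ε = 1 ∨ ε = -1)
    (A : ℝ → ℤ → ℂ)
    (hmem : ∀ t ∈ Ioo t₁ t₂, wMem s (A t))
    (hC1 : C1IntoL2s s t₁ t₂ A)
    (hode : ∀ t ∈ Ioo t₁ t₂, ∀ k : ℤ,
      Complex.I * deriv (fun τ : ℝ => A τ k) t =
        (ε : ℂ) * (1 / (8 * (Real.pi : ℂ) * t)) * cubicSum (A t) t k
          - ((M : ℂ) / (4 * (Real.pi : ℂ) * t)) * A t k) :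
    ∀ t ∈ Ioo t₁ t₂, ∀ t' ∈ Ioo t₁ t₂,
      ∑' k : ℤ, ‖A t k‖ ^ 2 = ∑' k : ℤ, ‖A t' k‖ ^ 2 := by
  obtain ⟨u, hu, huA⟩ := hC1.exists_contDiffOn_lp (by linarith)
  refine mass_conservation_general isOpen_Ioo isPreconnected_Ioo (hu.differentiableOn one_ne_zero)
    huA (fun t ht => (hmem t ht).summable_norm hs) (fun t _ x => (norm_resonancePhase t x).le)
    (fun t _ => isHermitianKernel_resonancePhase t) (g := fun t => ε * (1 / (8 * Real.pi * t)))
    (m := fun t _ => -(M / (4 * Real.pi * t))) fun t ht k => ?_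
  rw [hode t ht k, cubicSum_eq_cubicInteraction]
  push_cast
  ring
end

section
/- There exists an absolute constant C such that for all sequences M, N ∈ ℓ^{2,1}(ℤ) and P, R ∈ ℓ²(ℤ): ∑_{k∈ℤ} (|M| ⋆ |N| ⋆ |P|)(k) |R_k| ≤ C ‖M‖_{ℓ²}^{1/2} ‖M‖_{ℓ^{2,1}}^{1/2} ‖N‖_{ℓ²}^{1/2} ‖N‖_{ℓ^{2,1}}^{1/2} ‖P‖_{ℓ²} ‖R‖_{ℓ²}, where (|M| ⋆ |N| ⋆ |P|)(k) := ∑_{(j₁,j₂,j₃)∈ℤ³, j₁+j₂+j₃=k} |M_{j₁}| |N_{j₂}| |P_{j₃}|. -/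
open scoped BigOperators ENNReal NNReal

/-- The `ℓ^{2,s}(ℤ)` norm (`s = 0` gives the `ℓ²(ℤ)` norm). -/
noncomputable def wnorm (s : ℝ) (a : ℤ → ℂ) : ℝ :=
  (∑' k : ℤ, (1 + |(k : ℝ)|) ^ (2 * s) * ‖a k‖ ^ 2) ^ (1 / 2 : ℝ)

/-!
Summing over the output index first, Hölder's inequality and translation invariance bound the
quadrilinear form by `‖M‖₁ ‖N‖₁ ‖P‖₂ ‖R‖₂`. A discrete Carlson inequality then gives
`‖a‖₁² ≤ 8 ‖a‖₂ ‖a‖_{2,1}`: apply Cauchy–Schwarz with the weight `(l + (1 + |k|))²`, whose inverse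
has sum at most `2 / l`, and take `l = ‖a‖_{2,1} / ‖a‖₂`, which balances the two resulting terms.
-/

theorem sum_range_inv_add_sq_le {l : ℝ} (hl : 0 < l) (n : ℕ) :
    ∑ i ∈ Finset.range n, ((l + (1 + i)) ^ 2)⁻¹ ≤ l⁻¹ := by
  have telescope (i : ℕ) :
      ((l + (1 + i)) ^ 2)⁻¹ ≤ (l + i)⁻¹ - (l + (i + 1 : ℕ))⁻¹ := by
    rw [inv_sub_inv (by positivity) (by positivity), inv_eq_one_div]
    push_cast
    rw [div_le_div_iff₀ (by positivity) (by positivity)]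
    nlinarith [(by positivity : 0 < l + i)]
  calc ∑ i ∈ Finset.range n, ((l + (1 + i)) ^ 2)⁻¹
      ≤ ∑ i ∈ Finset.range n, ((l + i)⁻¹ - (l + (i + 1 : ℕ))⁻¹) :=
        Finset.sum_le_sum fun i _ => telescope i
    _ = l⁻¹ - (l + n)⁻¹ := by
        rw [Finset.sum_range_sub' fun i : ℕ => (l + i)⁻¹, Nat.cast_zero, add_zero]
    _ ≤ l⁻¹ := sub_le_self _ (by positivity)

theorem sum_int_inv_add_abs_sq_le {l : ℝ} (hl : 0 < l) (t : Finset ℤ) :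
    ∑ k ∈ t, ((l + (1 + |(k : ℝ)|)) ^ 2)⁻¹ ≤ 2 / l := by
  set w : ℤ → ℝ := fun k => ((l + (1 + |(k : ℝ)|)) ^ 2)⁻¹
  have w_nonneg (k : ℤ) : 0 ≤ w k := by positivity
  have w_natCast (n : ℕ) : w n = ((l + (1 + n)) ^ 2)⁻¹ := by
    simp only [w, Int.cast_natCast, Nat.abs_cast]
  have sum_range_le (n : ℕ) : ∑ i ∈ Finset.range n, w i ≤ l⁻¹ := by
    simpa only [w_natCast] using sum_range_inv_add_sq_le hl n
  have w_neg_le (n : ℕ) : w (-(n + 1)) ≤ w n := by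
    have : |((-(n + 1) : ℤ) : ℝ)| = n + 1 := by
      push_cast
      rw [abs_neg, abs_of_nonneg (by positivity)]
    rw [w_natCast]
    simp only [w, this]
    gcongr
    linarith
  have summable_nat : Summable fun n : ℕ => w n :=
    summable_of_sum_range_le (fun n => w_nonneg n) sum_range_le
  have summable_neg : Summable fun n : ℕ => w (-(n + 1)) :=
    summable_nat.of_nonneg_of_le (fun _ => w_nonneg _) w_neg_le
  have tsum_nat_le : ∑' n : ℕ, w n ≤ l⁻¹ :=
    Real.tsum_le_of_sum_range_le (fun n => w_nonneg n) sum_range_le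
  calc ∑ k ∈ t, w k
      ≤ ∑' n : ℕ, w n + ∑' n : ℕ, w (-(n + 1)) :=
        sum_le_hasSum t (fun k _ => w_nonneg k)
          (summable_nat.hasSum.of_nat_of_neg_add_one summable_neg.hasSum)
    _ ≤ l⁻¹ + l⁻¹ :=
        add_le_add tsum_nat_le ((summable_neg.tsum_le_tsum w_neg_le summable_nat).trans tsum_nat_le)
    _ = 2 / l := by ring

theorem sq_sum_le_mul_sum_sq_add_sum_sq {l : ℝ} (hl : 0 < l) (t : Finset ℤ) (f : ℤ → ℝ) :
    (∑ k ∈ t, f k) ^ 2 ≤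
      2 / l * (2 * (l ^ 2 * ∑ k ∈ t, f k ^ 2 + ∑ k ∈ t, ((1 + |(k : ℝ)|) * f k) ^ 2)) := by
  calc (∑ k ∈ t, f k) ^ 2
      = (∑ k ∈ t, (l + (1 + |(k : ℝ)|))⁻¹ * ((l + (1 + |(k : ℝ)|)) * f k)) ^ 2 := by
        congr! 2 with k
        rw [inv_mul_cancel_left₀ (by positivity)]
    _ ≤ (∑ k ∈ t, (l + (1 + |(k : ℝ)|))⁻¹ ^ 2) *
          ∑ k ∈ t, ((l + (1 + |(k : ℝ)|)) * f k) ^ 2 :=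
        Finset.sum_mul_sq_le_sq_mul_sq t _ _
    _ ≤ 2 / l * ∑ k ∈ t, 2 * ((l * f k) ^ 2 + ((1 + |(k : ℝ)|) * f k) ^ 2) := by
        gcongr with k
        · simpa only [inv_pow] using sum_int_inv_add_abs_sq_le hl t
        · rw [add_mul]
          exact add_sq_le
    _ = _ := by simp only [mul_pow, ← Finset.mul_sum, Finset.sum_add_distrib]

theorem carlson_sq_sum_le (t : Finset ℤ) (f : ℤ → ℝ) :
    (∑ k ∈ t, f k) ^ 2 ≤
      8 * √(∑ k ∈ t, f k ^ 2) * √(∑ k ∈ t, ((1 + |(k : ℝ)|) * f k) ^ 2) := by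
  set A := √(∑ k ∈ t, f k ^ 2)
  set B := √(∑ k ∈ t, ((1 + |(k : ℝ)|) * f k) ^ 2)
  have A_sq : A ^ 2 = ∑ k ∈ t, f k ^ 2 := Real.sq_sqrt (by positivity)
  have B_sq : B ^ 2 = ∑ k ∈ t, ((1 + |(k : ℝ)|) * f k) ^ 2 := Real.sq_sqrt (by positivity)
  have A_le_B : A ≤ B := by
    refine Real.sqrt_le_sqrt (Finset.sum_le_sum fun k _ => ?_)
    rw [mul_pow]
    exact le_mul_of_one_le_left (sq_nonneg _)
      (one_le_pow₀ (le_add_of_nonneg_right (abs_nonneg _)))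
  have A_nonneg : 0 ≤ A := Real.sqrt_nonneg _
  obtain A_zero | A_pos := A_nonneg.eq_or_lt'
  · have f_zero : ∀ k ∈ t, f k = 0 := by
      have : ∑ k ∈ t, f k ^ 2 = 0 := by rw [← A_sq, A_zero, zero_pow two_ne_zero]
      simpa [Finset.sum_eq_zero_iff_of_nonneg, sq_nonneg] using this
    rw [Finset.sum_eq_zero f_zero, A_zero]
    simp
  · have B_pos : 0 < B := A_pos.trans_le A_le_B
    calc (∑ k ∈ t, f k) ^ 2
        ≤ 2 / (B / A) * (2 * ((B / A) ^ 2 * A ^ 2 + B ^ 2)) := by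
          rw [A_sq, B_sq]
          exact sq_sum_le_mul_sum_sq_add_sum_sq (div_pos B_pos A_pos) t f
      _ = 8 * A * B := by
          field_simp
          ring

theorem wnorm_eq_sqrt (s : ℝ) (a : ℤ → ℂ) :
    wnorm s a = √(∑' k : ℤ, (1 + |(k : ℝ)|) ^ (2 * s) * ‖a k‖ ^ 2) :=
  (Real.sqrt_eq_rpow _).symm

theorem wnorm_nonneg (s : ℝ) (a : ℤ → ℂ) : 0 ≤ wnorm s a :=
  wnorm_eq_sqrt s a ▸ Real.sqrt_nonneg _

theorem wMem.mono {s r : ℝ} {a : ℤ → ℂ} (h : wMem s a) (hrs : r ≤ s) : wMem r a := by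
  refine Summable.of_nonneg_of_le (fun k => by positivity) (fun k => ?_) h
  gcongr
  exact le_add_of_nonneg_right (abs_nonneg _)

theorem wMem.sqrt_sum_le_wnorm {s : ℝ} {a : ℤ → ℂ} (h : wMem s a) (t : Finset ℤ) :
    √(∑ k ∈ t, (1 + |(k : ℝ)|) ^ (2 * s) * ‖a k‖ ^ 2) ≤ wnorm s a := by
  rw [wnorm_eq_sqrt]
  exact Real.sqrt_le_sqrt (h.sum_le_tsum t fun k _ => by positivity)

theorem wMem.ofReal_wnorm_zero {a : ℤ → ℂ} (h : wMem 0 a) :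
    ENNReal.ofReal (wnorm 0 a) = (∑' k : ℤ, ‖a k‖ₑ ^ (2 : ℝ)) ^ (1 / 2 : ℝ) := by
  rw [wnorm, ← ENNReal.ofReal_rpow_of_nonneg (tsum_nonneg fun k => by positivity) (by norm_num),
    ENNReal.ofReal_tsum_of_nonneg (fun k => by positivity) h]
  congr! 3 with k
  rw [mul_zero, Real.rpow_zero, one_mul, ENNReal.ofReal_pow (norm_nonneg _), ofReal_norm,
    ENNReal.rpow_two]

theorem wMem.tsum_enorm_le {a : ℤ → ℂ} (h : wMem 1 a) :
    ∑' k : ℤ, ‖a k‖ₑ ≤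
      ENNReal.ofReal (√8 * wnorm 0 a ^ (1 / 2 : ℝ) * wnorm 1 a ^ (1 / 2 : ℝ)) := by
  refine ENNReal.summable.tsum_le_of_sum_le fun t => ?_
  have l2_le : √(∑ k ∈ t, ‖a k‖ ^ 2) ≤ wnorm 0 a := by
    simpa using (h.mono zero_le_one).sqrt_sum_le_wnorm t
  have weighted_l2_le : √(∑ k ∈ t, ((1 + |(k : ℝ)|) * ‖a k‖) ^ 2) ≤ wnorm 1 a := by
    simpa [mul_pow] using h.sqrt_sum_le_wnorm t
  have sq_le : (∑ k ∈ t, ‖a k‖) ^ 2 ≤ 8 * wnorm 0 a * wnorm 1 a := by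
    refine (carlson_sq_sum_le t _).trans ?_
    gcongr
    exact mul_nonneg (by norm_num) (wnorm_nonneg 0 a)
  simp_rw [← ofReal_norm]
  rw [← ENNReal.ofReal_sum_of_nonneg fun k _ => norm_nonneg _, ← Real.sqrt_eq_rpow,
    ← Real.sqrt_eq_rpow, ← Real.sqrt_mul (by norm_num),
    ← Real.sqrt_mul (mul_nonneg (by norm_num) (wnorm_nonneg 0 a))]
  exact ENNReal.ofReal_le_ofReal (Real.le_sqrt_of_sq_le sq_le)

theorem tsum_mul_le_Lp_mul_Lq {ι : Type*} {p q : ℝ} (hpq : p.HolderConjugate q)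
    (f g : ι → ℝ≥0∞) :
    ∑' i, f i * g i ≤ (∑' i, f i ^ p) ^ (1 / p) * (∑' i, g i ^ q) ^ (1 / q) := by
  let _ : MeasurableSpace ι := ⊤
  simpa only [MeasureTheory.lintegral_count, Pi.mul_apply] using
    ENNReal.lintegral_mul_le_Lp_mul_Lq MeasureTheory.Measure.count hpq
      (measurable_from_top (f := f)).aemeasurable (measurable_from_top (f := g)).aemeasurable

theorem tsum_conv_mul_le_tsum_mul_Lp_mul_Lq {G : Type*} [AddGroup G] {p q : ℝ}
    (hpq : p.HolderConjugate q) (f g u v : G → ℝ≥0∞) :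
    ∑' k, (∑' j : G × G, f j.1 * g j.2 * u (k - j.1 - j.2)) * v k ≤
      (∑' i, f i) * (∑' i, g i) * ((∑' i, u i ^ p) ^ (1 / p) * (∑' i, v i ^ q) ^ (1 / q)) := by
  have translate_le (m : G) :
      ∑' k, u (k - m) * v k ≤ (∑' i, u i ^ p) ^ (1 / p) * (∑' i, v i ^ q) ^ (1 / q) := by
    rw [← (Equiv.subRight m).tsum_eq fun i => u i ^ p]
    exact tsum_mul_le_Lp_mul_Lq hpq (fun k => u (k - m)) v
  calc ∑' k, (∑' j : G × G, f j.1 * g j.2 * u (k - j.1 - j.2)) * v k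
      = ∑' j : G × G, f j.1 * g j.2 * ∑' k, u (k - (j.2 + j.1)) * v k := by
        simp_rw [← ENNReal.tsum_mul_right, ← ENNReal.tsum_mul_left, sub_add_eq_sub_sub_swap,
          mul_assoc]
        exact ENNReal.tsum_comm
    _ ≤ ∑' j : G × G, f j.1 * g j.2 *
          ((∑' i, u i ^ p) ^ (1 / p) * (∑' i, v i ^ q) ^ (1 / q)) := by
        gcongr with j
        exact translate_le (j.2 + j.1)
    _ = _ := by
        rw [ENNReal.tsum_mul_right, ENNReal.tsum_prod (f := fun a b => f a * g b)]
        simp_rw [ENNReal.tsum_mul_left, ENNReal.tsum_mul_right]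

/-- The quadrilinear estimate
`∑_k (|M| ⋆ |N| ⋆ |P|)(k) |R_k| ≤ C ‖M‖₂^{1/2} ‖M‖_{2,1}^{1/2} ‖N‖₂^{1/2} ‖N‖_{2,1}^{1/2} ‖P‖₂ ‖R‖₂`,
where the sums on the left are taken in `ℝ≥0∞` (so the inequality also asserts finiteness). -/
theorem quadrilinear_convolution_estimate :
    ∃ C : ℝ, 0 < C ∧ ∀ M N P R : ℤ → ℂ,
      wMem 1 M → wMem 1 N → wMem 0 P → wMem 0 R →
      ∑' k : ℤ,
          (∑' j : ℤ × ℤ,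
            (‖M j.1‖₊ * ‖N j.2‖₊ * ‖P (k - j.1 - j.2)‖₊ : ℝ≥0∞)) * (‖R k‖₊ : ℝ≥0∞) ≤
        ENNReal.ofReal (C * wnorm 0 M ^ (1 / 2 : ℝ) * wnorm 1 M ^ (1 / 2 : ℝ) *
          wnorm 0 N ^ (1 / 2 : ℝ) * wnorm 1 N ^ (1 / 2 : ℝ) * wnorm 0 P * wnorm 0 R) := by
  refine ⟨√8 * √8, by positivity, fun M N P R hM hN hP hR => ?_⟩
  have h0M := wnorm_nonneg 0 M
  have h1M := wnorm_nonneg 1 M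
  have h0N := wnorm_nonneg 0 N
  have h1N := wnorm_nonneg 1 N
  have h0P := wnorm_nonneg 0 P
  calc _ ≤ (∑' k, ‖M k‖ₑ) * (∑' k, ‖N k‖ₑ) *
        ((∑' k, ‖P k‖ₑ ^ (2 : ℝ)) ^ (1 / 2 : ℝ) * (∑' k, ‖R k‖ₑ ^ (2 : ℝ)) ^ (1 / 2 : ℝ)) :=
        tsum_conv_mul_le_tsum_mul_Lp_mul_Lq .two_two (‖M ·‖ₑ) (‖N ·‖ₑ) (‖P ·‖ₑ) (‖R ·‖ₑ)
    _ ≤ ENNReal.ofReal (√8 * wnorm 0 M ^ (1 / 2 : ℝ) * wnorm 1 M ^ (1 / 2 : ℝ)) *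
          ENNReal.ofReal (√8 * wnorm 0 N ^ (1 / 2 : ℝ) * wnorm 1 N ^ (1 / 2 : ℝ)) *
          (ENNReal.ofReal (wnorm 0 P) * ENNReal.ofReal (wnorm 0 R)) := by
        rw [hP.ofReal_wnorm_zero, hR.ofReal_wnorm_zero]
        gcongr
        exacts [hM.tsum_enorm_le, hN.tsum_enorm_le]
    _ = _ := by
        rw [← ENNReal.ofReal_mul (by positivity), ← ENNReal.ofReal_mul h0P,
          ← ENNReal.ofReal_mul (by positivity)]
        ring_nf
end
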